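/- Let G = SL₄(ℤ), let r be a positive integer, let p₁, …, p_r be the first r odd primes, and let L_r ≤ G be the preimage under the reduction map G → ∏_{i=1}^r SL₄(𝔽_{p_i}) of the subgroup ∏_{i=1}^r {±I₄}. Then for all sufficiently large r, the index satisfies r^{r/2} ≤ [G : L_r] ≤ (2r)^{48r}. -/

import Mathlib

instance : Fact (Even (Fintype.card (Fin 4))) := ⟨⟨2, rfl⟩⟩

/-- The `i`-th odd prime (`i = 0` gives `3`): the `(i+1)`-st prime number. -/
noncomputable def oddPrime (i : ℕ) : ℕ := Nat.nth Nat.Prime (i + 1)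

/-- Simultaneous reduction map `SL₄(ℤ) → ∏_{i<r} SL₄(𝔽_{pᵢ})`, where
`p₀, …, p_{r-1}` are the first `r` odd primes. -/
noncomputable def redMap (r : ℕ) :
    Matrix.SpecialLinearGroup (Fin 4) ℤ →*
      ∀ i : Fin r, Matrix.SpecialLinearGroup (Fin 4) (ZMod (oddPrime i)) :=
  Pi.monoidHom fun i =>
    Matrix.SpecialLinearGroup.map (Int.castRingHom (ZMod (oddPrime i)))

/-- `Lr r ≤ SL₄(ℤ)` is the preimage under the reduction map
`SL₄(ℤ) → ∏_{i<r} SL₄(𝔽_{pᵢ})` of the subgroup `∏_{i<r} {±I₄}`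
(the subgroup `{±I₄}` is the cyclic subgroup generated by `-I₄`). -/
noncomputable def Lr (r : ℕ) : Subgroup (Matrix.SpecialLinearGroup (Fin 4) ℤ) :=
  Subgroup.comap (redMap r)
    (Subgroup.pi Set.univ fun _ => Subgroup.zpowers (-1))

open Matrix Finset

theorem lcmUpto_le_pow_primeCounting (n : ℕ) : n.lcmUpto ≤ n ^ n.primeCounting := by
  rw [Nat.lcmUpto_eq_prod_pow_log, ← Nat.primesLE_card_eq_primeCounting]
  refine prod_le_pow_card _ _ _ fun p hp => Nat.pow_log_le_self p ?_
  have h := Nat.le_of_mem_primesLE hp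
  have h' := (Nat.prime_of_mem_primesLE hp).pos
  omega

/-- A weak Chebyshev bound. -/
theorem lt_primeCounting_two_mul_pow_three {r : ℕ} (hr : 2 ≤ r) :
    r < ((2 * r) ^ 3).primeCounting := by
  by_contra! h
  have hlt : (2 * r) ^ 3 < 2 ^ (6 * r) := by
    calc (2 * r) ^ 3 < (2 ^ (2 * r)) ^ 3 := Nat.pow_lt_pow_left Nat.lt_two_pow_self (by norm_num)
      _ = 2 ^ (6 * r) := by rw [← pow_mul]; congr 1; ring
  have hpow : 2 ^ (2 * r) ^ 3 ≤ 2 ^ (6 * r + 6 * r * r) := by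
    calc 2 ^ (2 * r) ^ 3 ≤ ((2 * r) ^ 3 + 1) * ((2 * r) ^ 3).lcmUpto :=
          Chebyshev.two_pow_le_mul_lcmUpto _
      _ ≤ 2 ^ (6 * r) * ((2 * r) ^ 3) ^ ((2 * r) ^ 3).primeCounting :=
          Nat.mul_le_mul hlt (lcmUpto_le_pow_primeCounting _)
      _ ≤ 2 ^ (6 * r) * ((2 * r) ^ 3) ^ r :=
          Nat.mul_le_mul_left _ (Nat.pow_le_pow_right (by positivity) h)
      _ ≤ 2 ^ (6 * r) * (2 ^ (6 * r)) ^ r :=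
          Nat.mul_le_mul_left _ (Nat.pow_le_pow_left hlt.le _)
      _ = 2 ^ (6 * r + 6 * r * r) := by rw [← pow_mul, ← pow_add]
  have hexp := (Nat.pow_le_pow_iff_right (by norm_num)).mp hpow
  nlinarith [Nat.mul_le_mul_left r hr, Nat.mul_le_mul_left (r * r) hr]

theorem oddPrime_prime (i : ℕ) : (oddPrime i).Prime :=
  Nat.nth_mem_of_infinite Nat.infinite_setOfPred_prime _

theorem succ_le_oddPrime (i : ℕ) : i + 1 ≤ oddPrime i :=
  Nat.le_nth fun hf => absurd hf Nat.infinite_setOfPred_prime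

theorem oddPrime_injective : Function.Injective oddPrime := fun _ _ h =>
  Nat.succ_injective (Nat.nth_injective Nat.infinite_setOfPred_prime h)

theorem oddPrime_le {r i : ℕ} (hr : 2 ≤ r) (hi : i < r) : oddPrime i ≤ (2 * r) ^ 3 := by
  refine Nat.le_of_lt_succ (Nat.nth_lt_of_lt_count ?_)
  have h := lt_primeCounting_two_mul_pow_three hr
  rw [Nat.primeCounting_eq_primeCounting'_succ, Nat.primeCounting'] at h
  exact lt_of_le_of_lt hi h

instance (i : ℕ) : NeZero (oddPrime i) := ⟨(oddPrime_prime i).ne_zero⟩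

theorem Matrix.SpecialLinearGroup.card_le {R n : Type*} [CommRing R] [Finite R] [Fintype n]
    [DecidableEq n] :
    Nat.card (SpecialLinearGroup n R) ≤ Nat.card R ^ (Fintype.card n * Fintype.card n) := by
  calc Nat.card (SpecialLinearGroup n R) ≤ Nat.card (n → n → R) :=
        Nat.card_le_card_of_injective (fun A => A.1) Subtype.val_injective
    _ = Nat.card R ^ (Fintype.card n * Fintype.card n) := by
        simp [Nat.card_fun, pow_mul]

theorem zpowers_neg_one_le_center {R n : Type*} [CommRing R] [Fintype n] [DecidableEq n]
    [Fact (Even (Fintype.card n))] :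
    Subgroup.zpowers (-1 : SpecialLinearGroup n R) ≤ Subgroup.center _ := by
  rw [Subgroup.zpowers_le, Subgroup.mem_center_iff]
  simp

theorem Lr_index_ne_zero (r : ℕ) : (Lr r).index ≠ 0 := by
  rw [Lr, Subgroup.index_comap]
  exact Subgroup.FiniteIndex.index_ne_zero

theorem Lr_index_le (r : ℕ) : (Lr r).index ≤ ∏ i : Fin r, oddPrime i ^ 16 := by
  rw [Lr, Subgroup.index_comap]
  refine (Nat.le_of_dvd Nat.card_pos ((Subgroup.relIndex_dvd_card _ _).trans
    (Subgroup.card_subgroup_dvd_card _))).trans ?_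
  rw [Nat.card_pi]
  refine prod_le_prod' fun i _ => ?_
  simpa using SpecialLinearGroup.card_le (R := ZMod (oddPrime i)) (n := Fin 4)

theorem transvection_mem_Lr {r : ℕ} {b : ℤ}
    (hb : SpecialLinearGroup.transvection (zero_ne_one (α := Fin 4)) b ∈ Lr r) (i : Fin r) :
    (oddPrime i : ℤ) ∣ b := by
  have h := zpowers_neg_one_le_center (Subgroup.mem_comap.mp hb i (Set.mem_univ i))
  have hmap : redMap r (SpecialLinearGroup.transvection (zero_ne_one (α := Fin 4)) b) i =
      SpecialLinearGroup.transvection zero_ne_one (b : ZMod (oddPrime i)) := by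
    ext j k
    change (SpecialLinearGroup.map (Int.castRingHom (ZMod (oddPrime i))) _).1 j k = _
    simp [SpecialLinearGroup.transvection_coe, Matrix.single_apply, Matrix.one_apply]
  rw [hmap, SpecialLinearGroup.transvection_mem_center_iff] at h
  exact (ZMod.intCast_zmod_eq_zero_iff_dvd _ _).mp h

theorem prod_oddPrime_le_Lr_index (r : ℕ) : ∏ i : Fin r, oddPrime i ≤ (Lr r).index := by
  have : Finite (SpecialLinearGroup (Fin 4) ℤ ⧸ Lr r) :=
    Nat.finite_of_card_ne_zero (Lr_index_ne_zero r)
  rw [← Nat.card_fin (∏ i : Fin r, oddPrime i)]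
  refine Nat.card_le_card_of_injective (fun x => QuotientGroup.mk
    (SpecialLinearGroup.transvection (zero_ne_one (α := Fin 4)) ((x : ℕ) : ℤ))) fun x y hxy => ?_
  have h := QuotientGroup.eq.mp hxy
  rw [SpecialLinearGroup.transvection_inv, ← SpecialLinearGroup.transvection_add,
    neg_add_eq_sub] at h
  have hdvd : (∏ i : Fin r, (oddPrime i : ℤ)) ∣ (y : ℕ) - (x : ℕ) := by
    refine Fintype.prod_dvd_of_coprime (fun i j hij => ?_) (transvection_mem_Lr h)
    exact Nat.isCoprime_iff_coprime.mpr ((Nat.coprime_primes (oddPrime_prime _)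
      (oddPrime_prime _)).mpr fun he => hij (Fin.ext (oddPrime_injective he)))
  have hmod : (x : ℕ) ≡ y [MOD ∏ i : Fin r, oddPrime i] :=
    Nat.modEq_iff_dvd.mpr (by exact_mod_cast hdvd)
  exact Fin.ext (hmod.eq_of_lt_of_lt x.2 y.2)

theorem pow_self_le_factorial_sq (n : ℕ) : n ^ n ≤ n.factorial ^ 2 := by
  calc n ^ n = ∏ _i ∈ range n, n := by simp
    _ ≤ ∏ i ∈ range n, (i + 1) * (n - 1 - i + 1) := by
        refine prod_le_prod' fun i hi => ?_
        obtain ⟨k, rfl⟩ := Nat.exists_eq_add_of_lt (mem_range.mp hi)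
        rw [show i + k + 1 - 1 - i = k by omega]
        nlinarith
    _ = n.factorial ^ 2 := by
        rw [prod_mul_distrib, prod_range_reflect (fun i => i + 1), prod_range_add_one_eq_factorial,
          sq]

theorem factorial_le_prod_oddPrime (r : ℕ) : r.factorial ≤ ∏ i : Fin r, oddPrime i := by
  rw [Fin.prod_univ_eq_prod_range oddPrime, ← prod_range_add_one_eq_factorial]
  exact prod_le_prod' fun i _ => succ_le_oddPrime i

theorem rpow_half_le_Lr_index (r : ℕ) : (r : ℝ) ^ ((r : ℝ) / 2) ≤ (Lr r).index := by
  have h : (r : ℝ) ^ r ≤ (Lr r).index ^ 2 := by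
    exact_mod_cast (pow_self_le_factorial_sq r).trans (Nat.pow_le_pow_left
      ((factorial_le_prod_oddPrime r).trans (prod_oddPrime_le_Lr_index r)) 2)
  rw [div_eq_mul_inv, Real.rpow_mul r.cast_nonneg, Real.rpow_natCast]
  calc ((r : ℝ) ^ r) ^ (2⁻¹ : ℝ) = √((r : ℝ) ^ r) := by rw [Real.sqrt_eq_rpow, one_div]
    _ ≤ (Lr r).index := Real.sqrt_le_iff.mpr ⟨by positivity, h⟩

theorem Lr_index_le_pow {r : ℕ} (hr : 2 ≤ r) : (Lr r).index ≤ (2 * r) ^ (48 * r) := by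
  calc (Lr r).index ≤ ∏ i : Fin r, oddPrime i ^ 16 := Lr_index_le r
    _ ≤ ∏ _i : Fin r, ((2 * r) ^ 3) ^ 16 :=
        prod_le_prod' fun i _ => Nat.pow_le_pow_left (oddPrime_le hr i.2) 16
    _ = (2 * r) ^ (48 * r) := by simp [← pow_mul]

/-- Let `G = SL₄(ℤ)`, let `r` be a positive integer, let `p₁, …, p_r` be the first `r`
odd primes, and let `L_r ≤ G` be the preimage under the reduction map
`G → ∏ SL₄(𝔽_{pᵢ})` of `∏ {±I₄}`.  Then for all sufficiently large `r`,
`r ^ (r/2) ≤ [G : L_r] ≤ (2r) ^ (48r)`. -/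
theorem index_Lr_bounds :
    ∃ r₀ : ℕ, ∀ r : ℕ, r₀ ≤ r →
      (r : ℝ) ^ ((r : ℝ) / 2) ≤ ((Lr r).index : ℝ) ∧
        ((Lr r).index : ℝ) ≤ ((2 * r : ℕ) : ℝ) ^ (48 * r) := by
  exact ⟨2, fun r hr => ⟨rpow_half_le_Lr_index r, by exact_mod_cast Lr_index_le_pow hr⟩⟩
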